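/- Let a, a', b > 0, and let X be a random variable valued in (0,1) with distribution μ_{a,a',b}. Then for all real t with −b < t < a', E(X^t) = ₃F₂(a',a'−t,b;a'+b,a+a';1)/₃F₂(a',a',b;a'+b,a+a';1). -/

import Mathlib

open MeasureTheory ProbabilityTheory Real Set Filter Topology

noncomputable def gammaDens (p σ y : ℝ) : ℝ :=
  if 0 < y then σ ^ p / Real.Gamma p * Real.exp (-(σ * y)) * y ^ (p - 1) else 0

noncomputable def gammaM (p σ : ℝ) : Measure ℝ :=
  MeasureTheory.volume.withDensity fun y => ENNReal.ofReal (gammaDens p σ y)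

noncomputable def beta1Dens (p q x : ℝ) : ℝ :=
  if 0 < x ∧ x < 1 then
    Real.Gamma (p + q) / (Real.Gamma p * Real.Gamma q) * x ^ (p - 1) * (1 - x) ^ (q - 1)
  else 0

noncomputable def beta1 (p q : ℝ) : Measure ℝ :=
  MeasureTheory.volume.withDensity fun x => ENNReal.ofReal (beta1Dens p q x)

noncomputable def beta2Dens (p q y : ℝ) : ℝ :=
  if 0 < y then
    Real.Gamma (p + q) / (Real.Gamma p * Real.Gamma q) * y ^ (p - 1) * (1 + y) ^ (-(p + q))
  else 0

noncomputable def beta2 (p q : ℝ) : Measure ℝ :=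
  MeasureTheory.volume.withDensity fun y => ENNReal.ofReal (beta2Dens p q y)

/-- Pochhammer (rising factorial) symbol `(a)_n`. -/
noncomputable def poch (a : ℝ) (n : ℕ) : ℝ := ∏ i ∈ Finset.range n, (a + (i : ℝ))

/-- Gauss hypergeometric function `₂F₁(a,b;c;x)`. -/
noncomputable def F21 (a b c x : ℝ) : ℝ :=
  ∑' n : ℕ, poch a n * poch b n / ((n.factorial : ℝ) * poch c n) * x ^ n

/-- Generalized hypergeometric `₃F₂(a₁,a₂,a₃;b₁,b₂;1)` at unit argument. -/
noncomputable def F32one (a1 a2 a3 b1 b2 : ℝ) : ℝ :=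
  ∑' n : ℕ, poch a1 n * poch a2 n * poch a3 n /
    ((n.factorial : ℝ) * poch b1 n * poch b2 n)

/-- Normalizing constant of the real beta-hypergeometric distribution. -/
noncomputable def Cbh (a a' b : ℝ) : ℝ :=
  Real.Gamma (a + b) / (Real.Gamma a * Real.Gamma b * F32one a a b (a + b) (a + a'))

noncomputable def bhDens (a a' b x : ℝ) : ℝ :=
  if 0 < x ∧ x < 1 then
    Cbh a a' b * x ^ (a - 1) * (1 - x) ^ (b - 1) * F21 a b (a + a') x
  else 0

/-- The real beta-hypergeometric distribution `μ_{a,a',b}`. -/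
noncomputable def bhMeasure (a a' b : ℝ) : Measure ℝ :=
  MeasureTheory.volume.withDensity fun x => ENNReal.ofReal (bhDens a a' b x)

lemma poch_pos {a : ℝ} (ha : 0 < a) (n : ℕ) : 0 < poch a n :=
  Finset.prod_pos fun i _ => by positivity

lemma poch_succ (a : ℝ) (n : ℕ) : poch a (n + 1) = poch a n * (a + n) :=
  Finset.prod_range_succ _ _

lemma poch_le {a c : ℝ} (ha : 0 < a) (h : a ≤ c) (n : ℕ) : poch a n ≤ poch c n :=
  Finset.prod_le_prod (fun i _ => by positivity) fun i _ => by linarith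

lemma Gamma_add_nat_poch {a : ℝ} (ha : 0 < a) (n : ℕ) :
    Real.Gamma (a + n) = poch a n * Real.Gamma a := by
  induction n with
  | zero => simp [poch]
  | succ k ih =>
    have h : a + (k : ℝ) ≠ 0 := by positivity
    rw [poch_succ, Nat.cast_succ, ← add_assoc, Real.Gamma_add_one h, ih]; ring

lemma beta_shift {p q : ℝ} (hp : 0 < p) (hq : 0 < q) (n : ℕ) :
    beta (p + n) q = beta p q * (poch p n / poch (p + q) n) := by
  have h1 := poch_pos (add_pos hp hq) n
  have h2 := Real.Gamma_pos_of_pos (add_pos hp hq)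
  rw [beta, beta, Gamma_add_nat_poch hp, add_right_comm, Gamma_add_nat_poch (add_pos hp hq)]
  field_simp

lemma beta_comm' (p q : ℝ) : beta p q = beta q p := by
  rw [beta, beta, mul_comm, add_comm]

lemma lint_beta {p q : ℝ} (hp : 0 < p) (hq : 0 < q) :
    ∫⁻ x in Ioo (0 : ℝ) 1, ENNReal.ofReal (x ^ (p - 1) * (1 - x) ^ (q - 1))
      = ENNReal.ofReal (beta p q) := by
  have h := lintegral_betaPDF_eq_one hp hq
  rw [lintegral_betaPDF] at h
  have hb := beta_pos hp hq
  have h2 : ∀ x : ℝ, ENNReal.ofReal (1 / beta p q * x ^ (p - 1) * (1 - x) ^ (q - 1))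
      = ENNReal.ofReal (1 / beta p q) * ENNReal.ofReal (x ^ (p - 1) * (1 - x) ^ (q - 1)) := by
    intro x
    rw [mul_assoc, ENNReal.ofReal_mul (by positivity)]
  simp_rw [h2] at h
  rw [lintegral_const_mul _ (by fun_prop)] at h
  rw [← one_mul (lintegral _ _), ← ENNReal.ofReal_one,
    show (1 : ℝ) = beta p q * (1 / beta p q) by field_simp, ENNReal.ofReal_mul hb.le,
    mul_assoc]
  rw [show beta p q * (1 / beta p q) = 1 by field_simp, h, mul_one]

lemma binom_hasSum (b : ℝ) {z : ℝ} (hz0 : 0 ≤ z) (hz : z < 1) :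
    HasSum (fun n : ℕ => poch b n / (n.factorial : ℝ) * z ^ n) ((1 - z) ^ (-b)) := by
  have h := (Real.one_div_one_sub_rpow_hasFPowerSeriesOnBall_zero b).hasSum (y := z)
    (by simp [enorm_eq_nnnorm, ← NNReal.coe_lt_coe, abs_of_nonneg hz0, hz])
  rw [Real.rpow_neg (by linarith)]
  simp only [zero_add, one_div] at h
  suffices hh : (fun n : ℕ => poch b n / (n.factorial : ℝ) * z ^ n) = fun n : ℕ =>
      (FormalMultilinearSeries.ofScalars ℝ (fun n : ℕ => Ring.choose (b + (n : ℝ) - 1) n) n)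
        fun _ => z by
    rw [hh]; exact h
  funext n
  have h1 := Ring.factorial_nsmul_multichoose_eq_ascPochhammer b n
  rw [Polynomial.ascPochhammer_smeval_eq_eval] at h1
  have h2 : poch b n = (ascPochhammer ℝ n).eval b := by
    clear h1
    induction n with
    | zero => simp [poch]
    | succ k ih => rw [poch_succ, ascPochhammer_succ_eval, ih]
  have h3 : Ring.choose (b + n - 1) n = poch b n / (n.factorial : ℝ) := by
    rw [Ring.choose, show b + (n : ℝ) - 1 - n + 1 = b by ring, h2, ← h1, nsmul_eq_mul]
    field_simp
  simp [FormalMultilinearSeries.ofScalars, h3]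

lemma binom_tsum {b : ℝ} (hb : 0 < b) {z : ℝ} (hz0 : 0 ≤ z) (hz : z < 1) :
    ENNReal.ofReal ((1 - z) ^ (-b)) =
      ∑' n : ℕ, ENNReal.ofReal (poch b n / (n.factorial : ℝ) * z ^ n) := by
  have h := binom_hasSum b hz0 hz
  rw [← h.tsum_eq, ENNReal.ofReal_tsum_of_nonneg _ h.summable]
  intro n
  have := poch_pos hb n
  positivity

lemma F21_tsum {a b c x : ℝ} (ha : 0 < a) (hb : 0 < b) (hac : a ≤ c) (hx : 0 < x) (hx1 : x < 1) :
    ENNReal.ofReal (F21 a b c x) =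
      ∑' n : ℕ, ENNReal.ofReal (poch a n * poch b n / ((n.factorial : ℝ) * poch c n) * x ^ n) := by
  have hn : ∀ n, 0 ≤ poch a n * poch b n / ((n.factorial : ℝ) * poch c n) * x ^ n := by
    intro n
    have := poch_pos hb n
    have := poch_pos ha n
    have := poch_pos (ha.trans_le hac) n
    positivity
  rw [F21, ENNReal.ofReal_tsum_of_nonneg hn]
  refine Summable.of_nonneg_of_le hn ?_ (binom_hasSum b hx.le hx1).summable
  intro n
  have h1 := poch_pos hb n
  have h2 := poch_pos ha n
  have h3 := poch_pos (ha.trans_le hac) n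
  refine mul_le_mul_of_nonneg_right ?_ (by positivity)
  rw [div_le_div_iff₀ (by positivity) (by positivity)]
  have := poch_le ha hac n
  have h4 : poch a n * (poch b n * n.factorial) ≤ poch c n * (poch b n * n.factorial) := by gcongr
  linarith

lemma F21_euler {a a' b x : ℝ} (ha : 0 < a) (ha' : 0 < a') (hb : 0 < b) (hx : 0 < x)
    (hx1 : x < 1) :
    ∫⁻ y in Ioo (0 : ℝ) 1,
      ENNReal.ofReal (y ^ (a - 1) * (1 - y) ^ (a' - 1) * (1 - x * y) ^ (-b)) =
    ENNReal.ofReal (beta a a') * ∑' n : ℕ, ENNReal.ofReal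
      (poch a n * poch b n / ((n.factorial : ℝ) * poch (a + a') n) * x ^ n) := by
  have h1 : ∀ y ∈ Ioo (0 : ℝ) 1,
      ENNReal.ofReal (y ^ (a - 1) * (1 - y) ^ (a' - 1) * (1 - x * y) ^ (-b)) =
      ∑' n : ℕ, ENNReal.ofReal (poch b n / (n.factorial : ℝ) * x ^ n) *
        ENNReal.ofReal (y ^ (a + n - 1) * (1 - y) ^ (a' - 1)) := by
    rintro y ⟨hy, hy1⟩
    have h1y : 0 < 1 - y := by linarith
    rw [ENNReal.ofReal_mul (by positivity), binom_tsum hb (by positivity) (by nlinarith),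
      ← ENNReal.tsum_mul_left]
    congr 1
    ext n
    have := poch_pos hb n
    rw [← ENNReal.ofReal_mul (by positivity), ← ENNReal.ofReal_mul (by positivity),
      show a + n - 1 = (a - 1) + n by ring, Real.rpow_add hy, Real.rpow_natCast, mul_pow]
    congr 1
    ring
  rw [setLIntegral_congr_fun measurableSet_Ioo h1, lintegral_tsum (fun n => by fun_prop),
    ← ENNReal.tsum_mul_left]
  congr 1
  ext n
  have := poch_pos hb n
  have := poch_pos ha n
  have := poch_pos (add_pos ha ha') n
  rw [lintegral_const_mul _ (by fun_prop), lint_beta (by positivity) ha', beta_shift ha ha',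
    ← ENNReal.ofReal_mul (by positivity), ← ENNReal.ofReal_mul (beta_pos ha ha').le]
  congr 1
  field_simp

/-- First substitution. -/
lemma subst_one {x : ℝ} (hx : 0 < x) (g : ℝ → ENNReal) :
    ∫⁻ z in Ioo 0 x, g z = ∫⁻ y in Ioo (0 : ℝ) 1, ENNReal.ofReal x * g (x * y) := by
  have h := lintegral_image_eq_lintegral_abs_deriv_mul (s := Ioo (0 : ℝ) 1)
    (f := fun y => x * y) (f' := fun _ => x) measurableSet_Ioo
    (fun y _ => by simpa using ((hasDerivAt_id y).const_mul x).hasDerivWithinAt)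
    (fun y _ z _ h => by simpa [hx.ne'] using h) g
  have him : (fun y => x * y) '' Ioo (0 : ℝ) 1 = Ioo 0 x := by
    rw [Set.image_mul_left_Ioo hx]; simp
  rw [him] at h
  simpa [abs_of_pos hx] using h

lemma subst_two {z : ℝ} (hz : z < 1) (g : ℝ → ENNReal) :
    ∫⁻ x in Ioo z 1, g x =
      ∫⁻ u in Ioo (0 : ℝ) 1, ENNReal.ofReal (1 - z) * g (1 - u * (1 - z)) := by
  have hz' : 0 < 1 - z := by linarith
  have h := lintegral_image_eq_lintegral_abs_deriv_mul (s := Ioo (0 : ℝ) 1)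
    (f := fun u => 1 - u * (1 - z)) (f' := fun _ => -(1 - z)) measurableSet_Ioo
    (fun y _ => by
      simpa using (((hasDerivAt_id y).mul_const (1 - z)).const_sub 1).hasDerivWithinAt)
    (fun y _ w _ h => by simpa [hz'.ne'] using h) g
  have him : (fun u => 1 - u * (1 - z)) '' Ioo (0 : ℝ) 1 = Ioo z 1 := by
    ext w
    simp only [mem_image, mem_Ioo]
    constructor
    · rintro ⟨u, ⟨h0, h1⟩, rfl⟩
      constructor <;> nlinarith
    · rintro ⟨h0, h1⟩
      refine ⟨(1 - w) / (1 - z), ⟨by apply div_pos <;> linarith, ?_⟩, by field_simp; ring⟩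
      rw [div_lt_one hz']; linarith
  rw [him] at h
  simpa only [abs_neg, abs_of_pos hz'] using h

lemma swap_tri {G : ℝ → ℝ → ENNReal} (hG : Measurable (Function.uncurry G)) :
    ∫⁻ x in Ioo (0 : ℝ) 1, ∫⁻ z in Ioo 0 x, G x z =
      ∫⁻ z in Ioo (0 : ℝ) 1, ∫⁻ x in Ioo z 1, G x z := by
  let S : Set (ℝ × ℝ) := {p | 0 < p.2 ∧ p.2 < p.1 ∧ p.1 < 1}
  have hS : MeasurableSet S :=
    (measurableSet_lt measurable_const measurable_snd).inter
      ((measurableSet_lt measurable_snd measurable_fst).inter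
        (measurableSet_lt measurable_fst measurable_const))
  have hm : Measurable (S.indicator (Function.uncurry G)) := hG.indicator hS
  have key := lintegral_lintegral_swap (μ := (volume : Measure ℝ)) (ν := (volume : Measure ℝ))
    (f := fun x z => S.indicator (Function.uncurry G) (x, z)) hm.aemeasurable
  have e1 : ∫⁻ x in Ioo (0 : ℝ) 1, ∫⁻ z in Ioo 0 x, G x z =
      ∫⁻ x, ∫⁻ z, S.indicator (Function.uncurry G) (x, z) := by
    rw [← lintegral_indicator measurableSet_Ioo]
    congr 1; ext x
    by_cases hx : x ∈ Ioo (0 : ℝ) 1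
    · rw [indicator_of_mem hx, ← lintegral_indicator measurableSet_Ioo]
      congr 1; ext z
      by_cases hz : z ∈ Ioo 0 x
      · rw [indicator_of_mem hz, indicator_of_mem (show (x, z) ∈ S from ⟨hz.1, hz.2, hx.2⟩)]; rfl
      · rw [indicator_of_notMem hz, indicator_of_notMem (fun h : (x, z) ∈ S => hz ⟨h.1, h.2.1⟩)]
    · rw [indicator_of_notMem hx]
      symm
      rw [lintegral_eq_zero_of_ae_eq_zero]
      refine Eventually.of_forall fun z => ?_
      exact indicator_of_notMem (fun h : (x, z) ∈ S => hx ⟨h.1.trans h.2.1, h.2.2⟩) _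
  have e2 : ∫⁻ z in Ioo (0 : ℝ) 1, ∫⁻ x in Ioo z 1, G x z =
      ∫⁻ z, ∫⁻ x, S.indicator (Function.uncurry G) (x, z) := by
    rw [← lintegral_indicator measurableSet_Ioo]
    congr 1; ext z
    by_cases hz : z ∈ Ioo (0 : ℝ) 1
    · rw [indicator_of_mem hz, ← lintegral_indicator measurableSet_Ioo]
      congr 1; ext x
      by_cases hx : x ∈ Ioo z 1
      · rw [indicator_of_mem hx, indicator_of_mem (show (x, z) ∈ S from ⟨hz.1, hx.1, hx.2⟩)]; rfl
      · rw [indicator_of_notMem hx, indicator_of_notMem (fun h : (x, z) ∈ S => hx h.2)]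
    · rw [indicator_of_notMem hz]
      symm
      rw [lintegral_eq_zero_of_ae_eq_zero]
      refine Eventually.of_forall fun x => ?_
      exact indicator_of_notMem (fun h : (x, z) ∈ S => hz ⟨h.1, h.2.1.trans h.2.2⟩) _
  rw [e1, e2, key]

/-- The double integral transformation. -/
lemma double_eq (a a' b t : ℝ) :
    ∫⁻ x in Ioo (0 : ℝ) 1, ∫⁻ y in Ioo (0 : ℝ) 1,
      ENNReal.ofReal (x ^ t * (x ^ (a - 1) * (1 - x) ^ (b - 1))) *
      ENNReal.ofReal (y ^ (a - 1) * (1 - y) ^ (a' - 1) * (1 - x * y) ^ (-b)) =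
    ∫⁻ z in Ioo (0 : ℝ) 1, ∫⁻ u in Ioo (0 : ℝ) 1,
      ENNReal.ofReal (z ^ (a - 1) * (1 - z) ^ (a' - 1)) *
      ENNReal.ofReal (u ^ (b - 1) * (1 - u) ^ (a' - 1) * (1 - u * (1 - z)) ^ (-(a' - t))) := by
  let G : ℝ → ℝ → ENNReal := fun x z => ENNReal.ofReal
    (x ^ (t - a') * (1 - x) ^ (b - 1) * z ^ (a - 1) * (x - z) ^ (a' - 1) * (1 - z) ^ (-b))
  have hG : Measurable (Function.uncurry G) := by
    simp only [G, Function.uncurry_def]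
    fun_prop
  have := swap_tri hG
  convert this using 1
  · refine setLIntegral_congr_fun measurableSet_Ioo fun x hx => ?_
    rw [subst_one hx.1]
    refine setLIntegral_congr_fun measurableSet_Ioo fun y hy => ?_
    obtain ⟨hx, hx1⟩ := hx
    obtain ⟨hy, hy1⟩ := hy
    have h1x : 0 < 1 - x := by linarith
    have h1y : 0 < 1 - y := by linarith
    simp only [G]
    rw [← ENNReal.ofReal_mul (by positivity), ← ENNReal.ofReal_mul (by positivity)]
    congr 1
    rw [show x - x * y = x * (1 - y) by ring, Real.mul_rpow hx.le h1y.le,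
      Real.mul_rpow hx.le hy.le]
    have e : x ^ t = x * x ^ (t - a') * x ^ (a' - 1) := by
      nth_rw 2 [← Real.rpow_one x]
      rw [← Real.rpow_add hx, ← Real.rpow_add hx]
      congr 1; ring
    rw [e]
    ring
  · refine setLIntegral_congr_fun measurableSet_Ioo fun z hz => ?_
    rw [subst_two hz.2]
    refine setLIntegral_congr_fun measurableSet_Ioo fun u hu => ?_
    obtain ⟨hz, hz1⟩ := hz
    obtain ⟨hu, hu1⟩ := hu
    have h1z : 0 < 1 - z := by linarith
    have h1u : 0 < 1 - u := by linarith
    simp only [G]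
    rw [← ENNReal.ofReal_mul (by positivity), ← ENNReal.ofReal_mul (by positivity)]
    congr 1
    rw [show 1 - (1 - u * (1 - z)) = u * (1 - z) by ring,
      show 1 - u * (1 - z) - z = (1 - u) * (1 - z) by ring, Real.mul_rpow hu.le h1z.le,
      Real.mul_rpow h1u.le h1z.le, neg_sub]
    have e : (1 - z) * (1 - z) ^ (b - 1) * (1 - z) ^ (-b) = 1 := by
      nth_rw 1 [← Real.rpow_one (1 - z)]
      rw [← Real.rpow_add h1z, ← Real.rpow_add h1z]
      simp
    linear_combination (-(z ^ (a - 1) * (1 - z) ^ (a' - 1) * (u ^ (b - 1) * (1 - u) ^ (a' - 1) *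
      (1 - u * (1 - z)) ^ (t - a')))) * e

/-- Evaluating the transformed double integral as a series. -/
lemma double_series {a a' b s : ℝ} (ha : 0 < a) (ha' : 0 < a') (hb : 0 < b) (hs : 0 < s) :
    ∫⁻ z in Ioo (0 : ℝ) 1, ∫⁻ u in Ioo (0 : ℝ) 1,
      ENNReal.ofReal (z ^ (a - 1) * (1 - z) ^ (a' - 1)) *
      ENNReal.ofReal (u ^ (b - 1) * (1 - u) ^ (a' - 1) * (1 - u * (1 - z)) ^ (-s)) =
    ENNReal.ofReal (beta a a' * beta a' b) * ∑' n : ℕ, ENNReal.ofReal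
      (poch a' n * poch s n * poch b n /
        ((n.factorial : ℝ) * poch (a' + b) n * poch (a + a') n)) := by
  have h1 : ∀ z ∈ Ioo (0 : ℝ) 1, (∫⁻ u in Ioo (0 : ℝ) 1,
      ENNReal.ofReal (z ^ (a - 1) * (1 - z) ^ (a' - 1)) *
      ENNReal.ofReal (u ^ (b - 1) * (1 - u) ^ (a' - 1) * (1 - u * (1 - z)) ^ (-s))) =
      ∑' n : ℕ, ENNReal.ofReal (beta b a' * (poch b n * poch s n /
        ((n.factorial : ℝ) * poch (b + a') n))) *
        ENNReal.ofReal (z ^ (a - 1) * (1 - z) ^ (a' + n - 1)) := by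
    rintro z ⟨hz, hz1⟩
    have h1z : 0 < 1 - z := by linarith
    rw [lintegral_const_mul _ (by fun_prop)]
    have := F21_euler (a := b) (a' := a') (b := s) (x := 1 - z) hb ha' hs h1z (by linarith)
    simp_rw [mul_comm (1 - z)] at this
    rw [this, ← mul_assoc, ← ENNReal.tsum_mul_left]
    congr 1
    ext n
    have := poch_pos hb n
    have := poch_pos hs n
    have := poch_pos (add_pos hb ha') n
    have := beta_pos hb ha'
    rw [← ENNReal.ofReal_mul (by positivity), ← ENNReal.ofReal_mul (by positivity),
      ← ENNReal.ofReal_mul (by positivity), show a' + n - 1 = (a' - 1) + n by ring,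
      Real.rpow_add h1z, Real.rpow_natCast]
    congr 1
    ring
  rw [setLIntegral_congr_fun measurableSet_Ioo h1, lintegral_tsum (fun n => by fun_prop),
    ← ENNReal.tsum_mul_left]
  congr 1
  ext n
  have := poch_pos hb n
  have := poch_pos hs n
  have := poch_pos ha' n
  have := poch_pos (add_pos hb ha') n
  have := poch_pos (add_pos ha' ha) n
  have := beta_pos hb ha'
  have := beta_pos ha' ha
  rw [lintegral_const_mul _ (by fun_prop), lint_beta ha (by positivity), beta_comm' a (a' + n),
    beta_shift ha' ha, beta_comm' a a', beta_comm' a' b, add_comm a' b, add_comm a a',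
    ← ENNReal.ofReal_mul (by positivity), ← ENNReal.ofReal_mul (by positivity)]
  congr 1
  field_simp

/-- Transformation of the unnormalised moment. -/
lemma moment_eq {a a' b t : ℝ} (ha : 0 < a) (ha' : 0 < a') (hb : 0 < b) (ht : t < a') :
    ∫⁻ x in Ioo (0 : ℝ) 1, ENNReal.ofReal (x ^ t * (x ^ (a - 1) * (1 - x) ^ (b - 1))) *
      ∑' n : ℕ, ENNReal.ofReal
        (poch a n * poch b n / ((n.factorial : ℝ) * poch (a + a') n) * x ^ n) =
    ENNReal.ofReal (beta a' b) * ∑' n : ℕ, ENNReal.ofReal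
      (poch a' n * poch (a' - t) n * poch b n /
        ((n.factorial : ℝ) * poch (a' + b) n * poch (a + a') n)) := by
  have hB := beta_pos ha ha'
  have h := double_eq a a' b t
  rw [double_series ha ha' hb (by linarith), ENNReal.ofReal_mul hB.le, mul_assoc] at h
  have h0 : ENNReal.ofReal (beta a a') ≠ 0 := by simpa using hB
  rw [← ENNReal.mul_right_inj h0 ENNReal.ofReal_ne_top, ← h,
    ← lintegral_const_mul]
  · refine setLIntegral_congr_fun measurableSet_Ioo fun x hx => ?_
    rw [lintegral_const_mul _ (by fun_prop), F21_euler ha ha' hb hx.1 hx.2]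
    ring
  · refine Measurable.mul (by fun_prop) (Measurable.tsum fun n => by fun_prop)

lemma bh_lintegral {a a' b : ℝ} (t : ℝ) (ha : 0 < a) (ha' : 0 < a') (hb : 0 < b) (ht : t < a') :
    ∫⁻ x, ENNReal.ofReal (x ^ t) ∂(bhMeasure a a' b) =
    (ENNReal.ofReal (Cbh a a' b) * ENNReal.ofReal (beta a' b)) * ∑' n : ℕ, ENNReal.ofReal
      (poch a' n * poch (a' - t) n * poch b n /
        ((n.factorial : ℝ) * poch (a' + b) n * poch (a + a') n)) := by
  let D : ℝ → ENNReal := (Ioo (0 : ℝ) 1).indicator fun x => ENNReal.ofReal (Cbh a a' b) *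
    (ENNReal.ofReal (x ^ (a - 1) * (1 - x) ^ (b - 1)) * ∑' n : ℕ, ENNReal.ofReal
        (poch a n * poch b n / ((n.factorial : ℝ) * poch (a + a') n) * x ^ n))
  have hD : (fun x => ENNReal.ofReal (bhDens a a' b x)) = D := by
    ext x
    by_cases hx : x ∈ Ioo (0 : ℝ) 1
    · have h1x : 0 < 1 - x := by linarith [hx.2]
      have hx0 := hx.1
      simp only [D]
      have hF : 0 ≤ F21 a b (a + a') x := tsum_nonneg fun n => by
        have := poch_pos hb n
        have := poch_pos ha n
        have := poch_pos (add_pos ha ha') n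
        positivity
      rw [indicator_of_mem hx, bhDens, if_pos (show 0 < x ∧ x < 1 from hx), ← F21_tsum ha hb (by linarith) hx.1 hx.2,
        ← ENNReal.ofReal_mul (by positivity), ← ENNReal.ofReal_mul' (by positivity)]
      congr 1
      ring
    · simp only [D]
      rw [indicator_of_notMem hx, bhDens, if_neg (show ¬ (0 < x ∧ x < 1) from hx), ENNReal.ofReal_zero]
  have hDm : Measurable D := by
    refine Measurable.indicator ?_ measurableSet_Ioo
    exact measurable_const.mul (Measurable.mul (by fun_prop)
      (Measurable.tsum fun n => by fun_prop))
  rw [bhMeasure, hD, lintegral_withDensity_eq_lintegral_mul _ hDm (by fun_prop), mul_assoc,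
    ← moment_eq ha ha' hb ht, ← lintegral_const_mul, ← lintegral_indicator measurableSet_Ioo]
  · congr 1
    ext x
    by_cases hx : x ∈ Ioo (0 : ℝ) 1
    · have hx0 := hx.1
      simp only [D, Pi.mul_apply]
      rw [indicator_of_mem hx, indicator_of_mem hx, ENNReal.ofReal_mul (p := x ^ t) (by positivity)]
      ring
    · simp only [D, Pi.mul_apply]
      rw [indicator_of_notMem hx, indicator_of_notMem hx, zero_mul]
  · refine Measurable.mul (by fun_prop) (Measurable.tsum fun n => by fun_prop)

lemma F32_toReal {a1 a2 a3 b1 b2 : ℝ} (h1 : 0 < a1) (h2 : 0 < a2) (h3 : 0 < a3)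
    (h4 : 0 < b1) (h5 : 0 < b2) :
    (∑' n : ℕ, ENNReal.ofReal (poch a1 n * poch a2 n * poch a3 n /
      ((n.factorial : ℝ) * poch b1 n * poch b2 n))).toReal = F32one a1 a2 a3 b1 b2 := by
  rw [ENNReal.tsum_toReal_eq (fun _ => ENNReal.ofReal_ne_top), F32one]
  congr 1
  ext n
  have := poch_pos h1 n
  have := poch_pos h2 n
  have := poch_pos h3 n
  have := poch_pos h4 n
  have := poch_pos h5 n
  rw [ENNReal.toReal_ofReal (by positivity)]

theorem bh_mellin_second_form {Ω : Type*} [MeasurableSpace Ω] (μ : Measure Ω)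
    [IsProbabilityMeasure μ] (X : Ω → ℝ) (hX : Measurable X)
    (hXval : ∀ ω, X ω ∈ Set.Ioo (0 : ℝ) 1)
    (a a' b : ℝ) (ha : 0 < a) (ha' : 0 < a') (hb : 0 < b)
    (hXlaw : μ.map X = bhMeasure a a' b)
    (t : ℝ) (ht1 : -b < t) (ht2 : t < a') :
    ∫ ω, X ω ^ t ∂μ =
      F32one a' (a' - t) b (a' + b) (a + a') / F32one a' a' b (a' + b) (a + a') := by
  have key : ∀ s : ℝ, s < a' → ∫⁻ ω, ENNReal.ofReal (X ω ^ s) ∂μ =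
      (ENNReal.ofReal (Cbh a a' b) * ENNReal.ofReal (beta a' b)) * ∑' n : ℕ, ENNReal.ofReal
      (poch a' n * poch (a' - s) n * poch b n /
        ((n.factorial : ℝ) * poch (a' + b) n * poch (a + a') n)) := by
    intro s hs
    rw [← bh_lintegral s ha ha' hb hs, ← hXlaw, lintegral_map (by fun_prop) hX]
  have h0 := congrArg ENNReal.toReal (key 0 ha')
  simp only [Real.rpow_zero, ENNReal.ofReal_one, lintegral_const, measure_univ, mul_one,
    ENNReal.toReal_one] at h0
  rw [ENNReal.toReal_mul, F32_toReal ha' (by linarith) hb (by positivity) (by positivity),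
    sub_zero] at h0
  rw [integral_eq_lintegral_of_nonneg_ae
    (Eventually.of_forall fun ω => Real.rpow_nonneg (hXval ω).1.le t)
    (hX.pow_const t).aestronglyMeasurable, key t ht2, ENNReal.toReal_mul,
    F32_toReal ha' (by linarith) hb (by positivity) (by positivity)]
  have hne : F32one a' a' b (a' + b) (a + a') ≠ 0 := by
    intro h
    rw [h, mul_zero] at h0
    exact one_ne_zero h0
  rw [eq_div_iff hne]
  linear_combination (-F32one a' (a' - t) b (a' + b) (a + a')) * h0
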